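/- Let n ≥ 2 and d ≥ 1, let a_1,…,a_n ∈ {0,1}^d be pairwise distinct and b_1,…,b_n ∈ {0,1}^d be pairwise distinct, and let t ≥ 1 be an integer. If for all i,j ∈ {1,…,n} the Hamming distance satisfies Hamming(a_i,b_j) ≥ t, then val(A,B) ≤ val(A) + val(B) + 200·n^6·exp(−100·(ln n)·t). -/

import Mathlib

open Finset

/-- The Gaussian kernel with parameter `C = 100 ln n`. -/
noncomputable def gaussK (n d : ℕ) (x y : Fin d → ℝ) : ℝ :=
  Real.exp (-(100 * Real.log n) * ∑ l, (x l - y l) ^ 2)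

/-- `val(A)`: the optimal value of the hard-margin SVM (without bias) on the
points `a_1, …, a_n`, all with label `+1`. -/
noncomputable def svmVal (n d : ℕ) (a : Fin n → Fin d → ℝ) : ℝ :=
  sInf {v : ℝ | ∃ α : Fin n → ℝ, (∀ i, 0 ≤ α i) ∧
    (∀ i, 1 ≤ ∑ j, α j * gaussK n d (a i) (a j)) ∧
    v = (1 / 2) * ∑ i, ∑ j, α i * α j * gaussK n d (a i) (a j)}

/-- `val(A,B)`: the optimal value of the hard-margin SVM (without bias) on the
points `a_1, …, a_n` with label `+1` and `b_1, …, b_n` with label `-1`. -/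
noncomputable def svmValAB (n d : ℕ) (a b : Fin n → Fin d → ℝ) : ℝ :=
  sInf {v : ℝ | ∃ α β : Fin n → ℝ, (∀ i, 0 ≤ α i) ∧ (∀ i, 0 ≤ β i) ∧
    (∀ i, 1 ≤ ∑ j, α j * gaussK n d (a i) (a j) - ∑ j, β j * gaussK n d (a i) (b j)) ∧
    (∀ i, 1 ≤ ∑ j, β j * gaussK n d (b i) (b j) - ∑ j, α j * gaussK n d (b i) (a j)) ∧
    v = (1 / 2) * ∑ i, ∑ j, α i * α j * gaussK n d (a i) (a j)
      + (1 / 2) * ∑ i, ∑ j, β i * β j * gaussK n d (b i) (b j)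
      - ∑ i, ∑ j, α i * β j * gaussK n d (a i) (b j)}

theorem gaussK_symm (n d : ℕ) (x y : Fin d → ℝ) : gaussK n d x y = gaussK n d y x := by
  unfold gaussK
  congr 2
  refine Finset.sum_congr rfl fun l _ => ?_
  ring

theorem gaussK_pos (n d : ℕ) (x y : Fin d → ℝ) : 0 < gaussK n d x y := Real.exp_pos _

theorem gaussK_self (n d : ℕ) (x : Fin d → ℝ) : gaussK n d x x = 1 := by
  simp [gaussK]

theorem gaussK_le_of (n d : ℕ) (x y : Fin d → ℝ) (t : ℝ) (h : t ≤ ∑ l, (x l - y l) ^ 2) :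
    gaussK n d x y ≤ Real.exp (-(100 * Real.log n) * t) := by
  unfold gaussK
  apply Real.exp_le_exp.mpr
  have : 0 ≤ Real.log n := Real.log_natCast_nonneg n
  nlinarith

theorem gaussK_le_one (n d : ℕ) (x y : Fin d → ℝ) : gaussK n d x y ≤ 1 := by
  have := gaussK_le_of n d x y 0 (Finset.sum_nonneg fun l _ => sq_nonneg _)
  simpa using this

theorem ones_feas (n d : ℕ) (a : Fin n → Fin d → ℝ) (i : Fin n) :
    1 ≤ ∑ j, (1 : ℝ) * gaussK n d (a i) (a j) := by
  have := Finset.single_le_sum (f := fun j => (1 : ℝ) * gaussK n d (a i) (a j))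
    (fun j _ => by have := gaussK_pos n d (a i) (a j); simp only [one_mul]; exact this.le)
    (Finset.mem_univ i)
  simpa [gaussK_self] using this

theorem svm_reduce (n d : ℕ) (a : Fin n → Fin d → ℝ) (α : Fin n → ℝ) (h0 : ∀ i, 0 ≤ α i)
    (h1 : ∀ i, 1 ≤ ∑ j, α j * gaussK n d (a i) (a j)) :
    ∃ α' : Fin n → ℝ, (∀ i, 0 ≤ α' i) ∧ (∀ i, α' i ≤ n) ∧
    (∀ i, 1 ≤ ∑ j, α' j * gaussK n d (a i) (a j)) ∧
    (1 / 2) * ∑ i, ∑ j, α' i * α' j * gaussK n d (a i) (a j) ≤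
      (1 / 2) * ∑ i, ∑ j, α i * α j * gaussK n d (a i) (a j) ∧
    (1 / 2) * ∑ i, ∑ j, α' i * α' j * gaussK n d (a i) (a j) ≤ (n : ℝ) ^ 2 / 2 := by
  have hones : (1 / 2) * ∑ i, ∑ j, (1 : ℝ) * 1 * gaussK n d (a i) (a j) ≤ (n : ℝ) ^ 2 / 2 := by
    have : ∑ i, ∑ j, (1 : ℝ) * 1 * gaussK n d (a i) (a j) ≤ ∑ i : Fin n, ∑ j : Fin n, (1 : ℝ) :=
      Finset.sum_le_sum fun i _ => Finset.sum_le_sum fun j _ => by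
        simpa using gaussK_le_one n d (a i) (a j)
    simp only [Finset.sum_const, Finset.card_univ, Fintype.card_fin, nsmul_eq_mul, mul_one] at this
    simp only [mul_one]
    nlinarith
  by_cases hv : (1 / 2) * ∑ i, ∑ j, α i * α j * gaussK n d (a i) (a j) ≤ (n : ℝ) ^ 2 / 2
  · refine ⟨α, h0, fun i => ?_, h1, le_rfl, hv⟩
    have hnn : ∀ i j, 0 ≤ α i * α j * gaussK n d (a i) (a j) := fun i j =>
      mul_nonneg (mul_nonneg (h0 i) (h0 j)) (gaussK_pos _ _ _ _).le
    have e1 := Finset.single_le_sum (f := fun i => ∑ j, α i * α j * gaussK n d (a i) (a j))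
      (fun i _ => Finset.sum_nonneg fun j _ => hnn i j) (Finset.mem_univ i)
    have e2 := Finset.single_le_sum (f := fun j => α i * α j * gaussK n d (a i) (a j))
      (fun j _ => hnn i j) (Finset.mem_univ i)
    simp only [gaussK_self] at e1 e2
    refine abs_le_of_sq_le_sq' ?_ (Nat.cast_nonneg n) |>.2
    nlinarith
  · refine ⟨fun _ => 1, fun _ => zero_le_one, fun i => ?_, fun i => ones_feas n d a i,
      le_trans hones (not_le.mp hv).le, hones⟩
    have : 1 ≤ n := by have := i.2; omega
    show (1 : ℝ) ≤ n
    exact_mod_cast this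

theorem svmAB_bdd (n d : ℕ) (a b : Fin n → Fin d → ℝ) :
    BddBelow {v : ℝ | ∃ α β : Fin n → ℝ, (∀ i, 0 ≤ α i) ∧ (∀ i, 0 ≤ β i) ∧
    (∀ i, 1 ≤ ∑ j, α j * gaussK n d (a i) (a j) - ∑ j, β j * gaussK n d (a i) (b j)) ∧
    (∀ i, 1 ≤ ∑ j, β j * gaussK n d (b i) (b j) - ∑ j, α j * gaussK n d (b i) (a j)) ∧
    v = (1 / 2) * ∑ i, ∑ j, α i * α j * gaussK n d (a i) (a j)
      + (1 / 2) * ∑ i, ∑ j, β i * β j * gaussK n d (b i) (b j)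
      - ∑ i, ∑ j, α i * β j * gaussK n d (a i) (b j)} := by
  refine ⟨0, ?_⟩
  rintro v ⟨α, β, hα, hβ, h1, h2, rfl⟩
  have e1 : 0 ≤ ∑ i, α i * (∑ j, α j * gaussK n d (a i) (a j)
      - ∑ j, β j * gaussK n d (a i) (b j)) :=
    Finset.sum_nonneg fun i _ => mul_nonneg (hα i) (by linarith [h1 i])
  have e2 : 0 ≤ ∑ i, β i * (∑ j, β j * gaussK n d (b i) (b j)
      - ∑ j, α j * gaussK n d (b i) (a j)) :=
    Finset.sum_nonneg fun i _ => mul_nonneg (hβ i) (by linarith [h2 i])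
  simp only [mul_sub, Finset.sum_sub_distrib, Finset.mul_sum, ← mul_assoc] at e1 e2
  have e3 : ∑ i, ∑ j, β i * α j * gaussK n d (b i) (a j)
      = ∑ i, ∑ j, α i * β j * gaussK n d (a i) (b j) := by
    rw [Finset.sum_comm]
    refine Finset.sum_congr rfl fun i _ => Finset.sum_congr rfl fun j _ => ?_
    rw [gaussK_symm n d (b j) (a i)]
    ring
  rw [e3] at e2
  linarith

theorem cross_bound (n d : ℕ) (x : Fin d → ℝ) (b : Fin n → Fin d → ℝ) (β : Fin n → ℝ) (δ : ℝ)
    (hβ : ∀ i, β i ≤ n) (hk : ∀ j, gaussK n d x (b j) ≤ δ) :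
    ∑ j, β j * gaussK n d x (b j) ≤ (n : ℝ) ^ 2 * δ := by
  have : ∑ j, β j * gaussK n d x (b j) ≤ ∑ j : Fin n, (n : ℝ) * δ :=
    Finset.sum_le_sum fun j _ =>
      mul_le_mul (hβ j) (hk j) (gaussK_pos _ _ _ _).le (Nat.cast_nonneg n)
  simp only [Finset.sum_const, Finset.card_univ, Fintype.card_fin, nsmul_eq_mul] at this
  nlinarith

theorem scale_lin {n : ℕ} (s : ℝ) (f g : Fin n → ℝ) :
    ∑ j, s * f j * g j = s * ∑ j, f j * g j := by
  rw [Finset.mul_sum]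
  exact Finset.sum_congr rfl fun _ _ => by ring

theorem scale_quad {n : ℕ} (s : ℝ) (f g : Fin n → ℝ) (K : Fin n → Fin n → ℝ) :
    ∑ i, ∑ j, (s * f i) * (s * g j) * K i j = s ^ 2 * ∑ i, ∑ j, f i * g j * K i j := by
  simp only [Finset.mul_sum]
  exact Finset.sum_congr rfl fun _ _ => Finset.sum_congr rfl fun _ _ => by ring

theorem delta_small (n t : ℕ) (hn : 2 ≤ n) (ht : 1 ≤ t) :
    (n : ℝ) ^ 2 * Real.exp (-(100 * Real.log n) * t) ≤ 1 / 2 := by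
  have hn' : (2 : ℝ) ≤ n := by exact_mod_cast hn
  have ht' : (1 : ℝ) ≤ t := by exact_mod_cast ht
  have hl : 0 ≤ Real.log n := Real.log_natCast_nonneg n
  have h1 : Real.exp (-(100 * Real.log n) * t) ≤ Real.exp (-(3 * Real.log n)) := by
    apply Real.exp_le_exp.mpr
    nlinarith
  have h2 : Real.exp (-(3 * Real.log n)) = ((n : ℝ) ^ 3)⁻¹ := by
    rw [Real.exp_neg, mul_comm, Real.exp_mul, Real.exp_log (by linarith)]
    norm_cast
  rw [h2] at h1
  have h3 : (n : ℝ) ^ 2 * ((n : ℝ) ^ 3)⁻¹ ≤ 1 / 2 := by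
    have : (n : ℝ) ^ 2 * ((n : ℝ) ^ 3)⁻¹ = (n : ℝ)⁻¹ := by field_simp
    rw [this, inv_le_comm₀ (by linarith) (by norm_num)]
    norm_num
    exact hn
  exact le_trans (mul_le_mul_of_nonneg_left h1 (by positivity)) h3

/-- NO case: if all pairs are at Hamming distance at least `t`, then
`val(A,B) ≤ val(A) + val(B) + 200 n⁶ exp(−100 (ln n) t)`. -/
theorem svm_no_case (n d : ℕ) (hn : 2 ≤ n) (hd : 1 ≤ d)
    (a b : Fin n → Fin d → ℝ)
    (ha01 : ∀ i l, a i l = 0 ∨ a i l = 1)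
    (hb01 : ∀ i l, b i l = 0 ∨ b i l = 1)
    (hainj : Function.Injective a) (hbinj : Function.Injective b)
    (t : ℕ) (ht : 1 ≤ t)
    (hfar : ∀ i j, (t : ℝ) ≤ ∑ l, (a i l - b j l) ^ 2) :
    svmValAB n d a b ≤ svmVal n d a + svmVal n d b
      + 200 * (n : ℝ) ^ 6 * Real.exp (-(100 * Real.log n) * t) := by
  set δ := Real.exp (-(100 * Real.log n) * t) with hδ
  have hδ0 : 0 < δ := Real.exp_pos _
  have hsm : (n : ℝ) ^ 2 * δ ≤ 1 / 2 := delta_small n t hn ht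
  have hn' : (2 : ℝ) ≤ n := by exact_mod_cast hn
  have key : ∀ vA vB : ℝ, (∃ α : Fin n → ℝ, (∀ i, 0 ≤ α i) ∧
      (∀ i, 1 ≤ ∑ j, α j * gaussK n d (a i) (a j)) ∧
      vA = (1 / 2) * ∑ i, ∑ j, α i * α j * gaussK n d (a i) (a j)) →
      (∃ α : Fin n → ℝ, (∀ i, 0 ≤ α i) ∧
      (∀ i, 1 ≤ ∑ j, α j * gaussK n d (b i) (b j)) ∧
      vB = (1 / 2) * ∑ i, ∑ j, α i * α j * gaussK n d (b i) (b j)) →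
      svmValAB n d a b ≤ vA + vB + 200 * (n : ℝ) ^ 6 * δ := by
    rintro vA vB ⟨α₀, hα₀, hα₁, rfl⟩ ⟨β₀, hβ₀, hβ₁, rfl⟩
    obtain ⟨α, hα, hαn, hα1, hαle, hαv⟩ := svm_reduce n d a α₀ hα₀ hα₁
    obtain ⟨β, hβ, hβn, hβ1, hβle, hβv⟩ := svm_reduce n d b β₀ hβ₀ hβ₁
    set e := (n : ℝ) ^ 2 * δ with he
    have he0 : 0 ≤ e := by positivity
    have hkab : ∀ i j, gaussK n d (a i) (b j) ≤ δ := fun i j =>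
      gaussK_le_of n d _ _ _ (hfar i j)
    have hkba : ∀ i j, gaussK n d (b i) (a j) ≤ δ := fun i j => by
      rw [gaussK_symm]; exact hkab j i
    have hs1 : 1 ≤ (1 + 2 * e) * (1 - e) := by nlinarith
    have hle : svmValAB n d a b ≤ (1 + 2 * e) ^ 2 *
        ((1 / 2) * ∑ i, ∑ j, α i * α j * gaussK n d (a i) (a j)
          + (1 / 2) * ∑ i, ∑ j, β i * β j * gaussK n d (b i) (b j)
          - ∑ i, ∑ j, α i * β j * gaussK n d (a i) (b j)) := by
      apply csInf_le (svmAB_bdd n d a b)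
      refine ⟨fun i => (1 + 2 * e) * α i, fun i => (1 + 2 * e) * β i,
        fun i => mul_nonneg (by linarith) (hα i), fun i => mul_nonneg (by linarith) (hβ i),
        fun i => ?_, fun i => ?_, ?_⟩
      · rw [scale_lin, scale_lin, ← mul_sub]
        refine le_trans hs1 (mul_le_mul_of_nonneg_left ?_ (by linarith))
        linarith [hα1 i, cross_bound n d (a i) b β δ hβn (hkab i)]
      · rw [scale_lin, scale_lin, ← mul_sub]
        refine le_trans hs1 (mul_le_mul_of_nonneg_left ?_ (by linarith))
        linarith [hβ1 i, cross_bound n d (b i) a α δ hαn (hkba i)]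
      · rw [scale_quad _ _ _ fun i j => gaussK n d (a i) (a j),
          scale_quad _ _ _ fun i j => gaussK n d (b i) (b j),
          scale_quad _ _ _ fun i j => gaussK n d (a i) (b j)]
        ring
    have hc : 0 ≤ ∑ i, ∑ j, α i * β j * gaussK n d (a i) (b j) :=
      Finset.sum_nonneg fun i _ => Finset.sum_nonneg fun j _ =>
        mul_nonneg (mul_nonneg (hα i) (hβ j)) (gaussK_pos _ _ _ _).le
    generalize (1 / 2) * ∑ i, ∑ j, α i * α j * gaussK n d (a i) (a j) = X at *
    generalize (1 / 2) * ∑ i, ∑ j, β i * β j * gaussK n d (b i) (b j) = Y at *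
    generalize ∑ i, ∑ j, α i * β j * gaussK n d (a i) (b j) = Z at *
    have h1 : (1 + 2 * e) ^ 2 * (X + Y - Z) ≤ (1 + 2 * e) ^ 2 * (X + Y) :=
      mul_le_mul_of_nonneg_left (by linarith) (by positivity)
    have h2 : (1 + 2 * e) ^ 2 * (X + Y) = X + Y + (4 * e + 4 * e ^ 2) * (X + Y) := by ring
    have h3 : (4 * e + 4 * e ^ 2) * (X + Y) ≤ (4 * e + 4 * e ^ 2) * (n : ℝ) ^ 2 :=
      mul_le_mul_of_nonneg_left (by linarith) (by positivity)
    have h4 : (4 * e + 4 * e ^ 2) * (n : ℝ) ^ 2 ≤ (6 * e) * (n : ℝ) ^ 2 :=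
      mul_le_mul_of_nonneg_right (by nlinarith) (by positivity)
    have h5 : (6 * e) * (n : ℝ) ^ 2 = 6 * ((n : ℝ) ^ 4 * δ) := by rw [he]; ring
    have h6 : (n : ℝ) ^ 4 * δ ≤ (n : ℝ) ^ 6 * δ :=
      mul_le_mul_of_nonneg_right (pow_le_pow_right₀ (by linarith) (by norm_num)) hδ0.le
    have h7 : 0 ≤ (n : ℝ) ^ 6 * δ := by positivity
    linarith
  have hA : svmValAB n d a b - svmVal n d b - 200 * (n : ℝ) ^ 6 * δ ≤ svmVal n d a := by
    refine le_csInf ⟨_, fun _ => 1, fun _ => zero_le_one, fun i => ones_feas n d a i, rfl⟩ ?_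
    intro vA hvA
    have hB : svmValAB n d a b - vA - 200 * (n : ℝ) ^ 6 * δ ≤ svmVal n d b := by
      refine le_csInf ⟨_, fun _ => 1, fun _ => zero_le_one, fun i => ones_feas n d b i, rfl⟩ ?_
      intro vB hvB
      linarith [key vA vB hvA hvB]
    linarith
  linarith
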